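/- The complete graph K₂₁ admits a decomposition of its edge set into 9 C₃-factors and 1 C₇-factor. -/

import Mathlib

open SimpleGraph

/-- `F` is an `H`-factor (of the complete graph on its vertex type, or of any graph
containing it): every connected component of `F`, viewed as an induced subgraph,
is isomorphic to `H`.  Since `F` is a graph on all of `V`, it is automatically spanning. -/
def IsHFactor {V W : Type*} (H : SimpleGraph W) (F : SimpleGraph V) : Prop :=
  ∀ c : F.ConnectedComponent, Nonempty (F.induce c.supp ≃g H)

/-- A `C_k`-factor: a spanning subgraph each of whose connected components is a
cycle of length `k` (in particular it is 2-regular). -/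
def IsCycleFactor {V : Type*} (k : ℕ) (F : SimpleGraph V) : Prop :=
  IsHFactor (SimpleGraph.cycleGraph k) F

/-- `(G; C_m^r, C_k^s)`: a partition of the edge set of `G` into `r` `C_m`-factors
and `s` `C_k`-factors. -/
def IsCycleDecomp {V : Type*} (G : SimpleGraph V) (m k r s : ℕ) : Prop :=
  ∃ F : Fin r ⊕ Fin s → SimpleGraph V,
    (∀ i, F i ≤ G) ∧
    (∀ e ∈ G.edgeSet, ∃! i, e ∈ (F i).edgeSet) ∧
    (∀ i : Fin r, IsCycleFactor m (F (Sum.inl i))) ∧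
    (∀ j : Fin s, IsCycleFactor k (F (Sum.inr j)))

/-- The graph on `V` obtained by pulling back disjoint copies of `H`. -/
def blockGraph {V ι W : Type*} (H : SimpleGraph W) (e : V → ι × W) : SimpleGraph V where
  Adj u v := (e u).1 = (e v).1 ∧ H.Adj (e u).2 (e v).2
  symm := ⟨fun _ _ h => ⟨h.1.symm, h.2.symm⟩⟩
  loopless := ⟨fun _ h => H.loopless.irrefl _ h.2⟩

theorem blockGraph_factor {V ι W : Type*} (H : SimpleGraph W) (hH : H.Connected)
    (e : V → ι × W) (he : Function.Bijective e) : IsHFactor H (blockGraph H e) := by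
  intro c
  obtain ⟨E, rfl⟩ : ∃ E : V ≃ ι × W, ⇑E = e := ⟨Equiv.ofBijective e he, rfl⟩
  induction c using SimpleGraph.ConnectedComponent.ind with | _ v => ?_
  have key : ∀ u, u ∈ ((blockGraph H E).connectedComponentMk v).supp ↔ (E u).1 = (E v).1 := by
    intro u
    rw [SimpleGraph.ConnectedComponent.mem_supp_iff, SimpleGraph.ConnectedComponent.eq]
    constructor
    · rintro ⟨w⟩
      induction w with
      | nil => rfl
      | cons h _ ih => exact h.1.trans ih
    · intro h
      let f : H →g blockGraph H E :=
        ⟨fun w => E.symm ((E v).1, w), fun {a b} hab => by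
          simpa [blockGraph] using hab⟩
      have h1 := (hH.preconnected (E u).2 (E v).2).map f
      have hu : f (E u).2 = u := by
        change E.symm ((E v).1, (E u).2) = u
        rw [← h]; simp
      have hv : f (E v).2 = v := by
        change E.symm ((E v).1, (E v).2) = v
        simp
      rwa [hu, hv] at h1
  refine ⟨⟨⟨fun u => (E u.1).2, fun w => ⟨E.symm ((E v).1, w), (key _).2 (by simp)⟩, ?_, ?_⟩, ?_⟩⟩
  · rintro ⟨u, hu⟩
    have := (key u).1 hu
    apply Subtype.ext
    simp [← this]
  · intro w; simp
  · rintro ⟨a, ha⟩ ⟨b, hb⟩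
    have h1 := (key a).1 ha
    have h2 := (key b).1 hb
    simp [blockGraph, h1, h2]
    exact Iff.rfl

instance {V ι W : Type*} [DecidableEq ι] (H : SimpleGraph W) [DecidableRel H.Adj] (e : V → ι × W) :
    DecidableRel (blockGraph H e).Adj :=
  fun u v => inferInstanceAs (Decidable ((e u).1 = (e v).1 ∧ H.Adj (e u).2 (e v).2))

def baseE : Fin 21 → Fin 7 × Fin 3 := fun u =>
  (![4, 3, 2, 3, 2, 5, 5, 3, 4, 1, 1, 0, 4, 6, 6, 1, 0, 5, 2, 0, 6] u,
   ![1, 1, 1, 2, 0, 1, 2, 0, 0, 1, 2, 2, 2, 2, 1, 0, 1, 0, 2, 0, 0] u)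

/-- Vertex `3x+c` stands for `(x,c)` in `Z₇ × Z₃`. -/
def triE (i : Fin 9) (u : Fin 21) : Fin 7 × Fin 3 :=
  if i.1 < 7 then baseE (u - Fin.ofNat 21 (3 * i.1))
  else
    (Fin.ofNat 7 (u.1 / 3 + (if i.1 = 7 then ![0, 4, 3] else ![0, 3, 0]) (Fin.ofNat 3 u.1)),
      Fin.ofNat 3 u.1)

def sevE (u : Fin 21) : Fin 3 × Fin 7 :=
  (Fin.ofNat 3 u.1, Fin.ofNat 7 (u.1 / 3 * ![1, 5, 1] (Fin.ofNat 3 u.1)))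

def theF : Fin 9 ⊕ Fin 1 → SimpleGraph (Fin 21)
  | .inl i => blockGraph (cycleGraph 3) (triE i)
  | .inr _ => blockGraph (cycleGraph 7) sevE

instance : ∀ i, DecidableRel (theF i).Adj
  | .inl i => inferInstanceAs (DecidableRel (blockGraph (cycleGraph 3) (triE i)).Adj)
  | .inr _ => inferInstanceAs (DecidableRel (blockGraph (cycleGraph 7) sevE).Adj)

theorem triE_inj : ∀ i, ∀ u v, triE i u = triE i v → u = v := by decide +kernel
theorem sevE_inj : ∀ u v, sevE u = sevE v → u = v := by decide +kernel

theorem theF_unique : ∀ u v : Fin 21, u ≠ v →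
    ∃ i, (theF i).Adj u v ∧ ∀ j, (theF j).Adj u v → j = i := by decide +kernel

/-- Lemma 3.3: `(K₂₁; C₃^9, C₇^1)` exists. -/
theorem K21_cycle_decomp_9_1 :
    IsCycleDecomp (⊤ : SimpleGraph (Fin 21)) 3 7 9 1 := by
  refine ⟨theF, fun _ => le_top, ?_, fun i => ?_, fun j => ?_⟩
  · intro e
    induction e using Sym2.ind with | _ u v => ?_
    intro h
    exact theF_unique u v (by simpa using h)
  · exact blockGraph_factor _ cycleGraph_connected _
      ((Fintype.bijective_iff_injective_and_card _).2 ⟨fun u v => triE_inj i u v, by simp⟩)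
  · exact blockGraph_factor _ cycleGraph_connected _
      ((Fintype.bijective_iff_injective_and_card _).2 ⟨fun u v => sevE_inj u v, by simp⟩)
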